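/- For every odd integer a ≥ 3, the range of the ℚ-linear map f_a : V_a → V_{a+1} (defined on basis vectors by f_a(e_{(r,s)}) = (2/(r+1))·e_{(min(r+1,s), max(r+1,s))} + (2/(s+1))·e_{(r,s+1)}) has codimension one in V_{a+1}, and the one-dimensional subspace spanned by the basis vector e_{((a−1)/2, (a+3)/2)} is a complement: V_{a+1} is the internal direct sum of range(f_a) and ℚ·e_{((a−1)/2,(a+3)/2)}. -/

import Mathlib

/-- The index set `B a = {(r,s) : 1 ≤ r ≤ s, r + s = a}`. -/
def B (a : ℕ) : Type := {p : ℕ × ℕ // 1 ≤ p.1 ∧ p.1 ≤ p.2 ∧ p.1 + p.2 = a}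

/-- The ℚ-vector space `V a` of finitely supported functions `B a → ℚ`. -/
abbrev V (a : ℕ) : Type := B a →₀ ℚ

/-- The image of the basis vector `e_{(r,s)}` under `f_a`, namely
`(2/(r+1)) • e_{(min(r+1,s), max(r+1,s))} + (2/(s+1)) • e_{(r, s+1)}`. -/
noncomputable def fAux (a : ℕ) (p : B a) : V (a + 1) :=
  Finsupp.single
    ⟨(min (p.1.1 + 1) p.1.2, max (p.1.1 + 1) p.1.2), by
      obtain ⟨⟨r, s⟩, h1, h2, h3⟩ := p
      dsimp only at *
      omega⟩ ((2 : ℚ) / (p.1.1 + 1))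
  + Finsupp.single
    ⟨(p.1.1, p.1.2 + 1), by
      obtain ⟨⟨r, s⟩, h1, h2, h3⟩ := p
      dsimp only at *
      omega⟩ ((2 : ℚ) / (p.1.2 + 1))

/-- The ℚ-linear map `f_a : V a → V (a+1)` determined on the standard basis by
`f_a(e_{(r,s)}) = (2/(r+1)) • e_{(min(r+1,s), max(r+1,s))} + (2/(s+1)) • e_{(r, s+1)}`. -/
noncomputable def f (a : ℕ) : V a →ₗ[ℚ] V (a + 1) :=
  Finsupp.lsum ℚ fun p => LinearMap.toSpanSingleton ℚ (V (a + 1)) (fAux a p)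

/-!
In the rescaled basis `ε_{(r,s)} = e_{(r,s)} / (r! s!)` the map becomes
`f ε_{(r,s)} = 2 (ε_{(r+1,s)} + ε_{(r,s+1)})` for `r < s`. Hence modulo the range of `f` each
`ε_{(r+1,s)}` is the negative of `ε_{(r,s+1)}`, so the range and any one basis vector span
everything. For odd `a` the case `r = s` does not occur, so the functional `ε_{(r,s)} ↦ (-1)^r`
vanishes on the range but on no basis vector, and the sum is direct.
-/

open Finsupp LinearMap Submodule
open scoped Nat

/-- The index `(r, s)` as a term of `B a`. The anonymous constructor has the underlying subtype as
its type, which `rw` and `simp` do not identify with `B a` since `B` is not reducible. -/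
def B.ofPair {a : ℕ} (r s : ℕ) (h : 1 ≤ r ∧ r ≤ s ∧ r + s = a) : B a := ⟨(r, s), h⟩

section Range

variable {a : ℕ}

theorem f_single (p : B a) (c : ℚ) : f a (single p c) = c • fAux a p := by
  simp [f]

theorem f_single_of_lt {r s : ℕ} (hr : 1 ≤ r) (hrs : r < s) (ha : r + s = a) :
    f a (single (.ofPair r s ⟨hr, hrs.le, ha⟩) 1) =
      single (.ofPair (r + 1) s (by omega)) (2 / (r + 1) : ℚ) +
        single (.ofPair r (s + 1) (by omega)) (2 / (s + 1) : ℚ) := by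
  have hsort : (min (r + 1) s, max (r + 1) s) = (r + 1, s) :=
    Prod.ext (min_eq_left hrs) (max_eq_right hrs)
  rw [f_single, one_smul]
  exact congrArg₂ (· + ·) (congrArg (single · _) (Subtype.ext hsort)) rfl

theorem single_mem_iff_single_one_mem {ι K : Type*} [DivisionRing K] {M : Submodule K (ι →₀ K)}
    (i : ι) {c : K} (hc : c ≠ 0) : single i c ∈ M ↔ single i 1 ∈ M := by
  rw [← smul_single_one, M.smul_mem_iff hc]

theorem single_succ_left_mem_iff_single_succ_right_mem {M : Submodule ℚ (V (a + 1))}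
    (hM : range (f a) ≤ M) {r s : ℕ} (hr : 1 ≤ r) (hrs : r < s) (ha : r + s = a) :
    single (.ofPair (r + 1) s (by omega)) 1 ∈ M ↔ single (.ofPair r (s + 1) (by omega)) 1 ∈ M := by
  have hsum := hM (mem_range_self (f a) (single (.ofPair r s ⟨hr, hrs.le, ha⟩) 1))
  rw [f_single_of_lt hr hrs ha] at hsum
  have hleft : (2 / (r + 1) : ℚ) ≠ 0 := by positivity
  have hright : (2 / (s + 1) : ℚ) ≠ 0 := by positivity
  rw [← single_mem_iff_single_one_mem _ hleft, ← single_mem_iff_single_one_mem _ hright]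
  exact ⟨fun h => (M.add_mem_iff_right h).1 hsum, fun h => (M.add_mem_iff_left h).1 hsum⟩

theorem single_ofPair_mem_iff_single_ofPair_one_mem {M : Submodule ℚ (V (a + 1))}
    (hM : range (f a) ≤ M) {r s : ℕ} (h : 1 ≤ r ∧ r ≤ s ∧ r + s = a + 1) :
    single (.ofPair r s h) 1 ∈ M ↔ single (.ofPair 1 a (by omega)) 1 ∈ M := by
  obtain ⟨hr, hrs, hsum⟩ := h
  induction r, hr using Nat.le_induction generalizing s with
  | base =>
    obtain rfl : s = a := by omega
    rfl
  | succ r hr ih =>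
    exact (single_succ_left_mem_iff_single_succ_right_mem hM hr hrs (by omega)).trans
      (ih (by omega) (by omega))

theorem single_mem_iff_single_mem_of_range_le {M : Submodule ℚ (V (a + 1))}
    (hM : range (f a) ≤ M) (p q : B (a + 1)) : single p 1 ∈ M ↔ single q 1 ∈ M :=
  (single_ofPair_mem_iff_single_ofPair_one_mem hM p.2).trans
    (single_ofPair_mem_iff_single_ofPair_one_mem hM q.2).symm

theorem codisjoint_range_span_single (q : B (a + 1)) :
    Codisjoint (range (f a)) (span ℚ {single q (1 : ℚ)}) := by
  rw [codisjoint_iff, eq_top_iff, ← (Finsupp.basisSingleOne (R := ℚ) (ι := B (a + 1))).span_eq,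
    coe_basisSingleOne, span_le]
  rintro _ ⟨p, rfl⟩
  have hq : single q 1 ∈ range (f a) ⊔ span ℚ {single q (1 : ℚ)} :=
    mem_sup_right (mem_span_singleton_self _)
  exact (single_mem_iff_single_mem_of_range_le le_sup_left p q).2 hq

end Range

/-- The functional `e_{(r,s)} ↦ (-1) ^ r * r! * s!` on `V a`, used to separate the basis vectors
from the range of `f`. -/
noncomputable def signedFactorial (a : ℕ) : V a →ₗ[ℚ] ℚ :=
  linearCombination ℚ fun p : B a => (-1 : ℚ) ^ p.1.1 * p.1.1 ! * p.1.2 !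

theorem signedFactorial_single {a r s : ℕ} (h : 1 ≤ r ∧ r ≤ s ∧ r + s = a) (c : ℚ) :
    signedFactorial a (single (.ofPair r s h) c) = c * ((-1) ^ r * r ! * s !) := by
  rw [signedFactorial, linearCombination_single]
  rfl

theorem signedFactorial_single_one_ne_zero {a : ℕ} (p : B a) :
    signedFactorial a (single p 1) ≠ 0 := by
  simp [signedFactorial, Nat.factorial_ne_zero]

theorem signedFactorial_f_single_of_lt {a r s : ℕ} (hr : 1 ≤ r) (hrs : r < s) (ha : r + s = a) :
    signedFactorial (a + 1) (f a (single (.ofPair r s ⟨hr, hrs.le, ha⟩) 1)) = 0 := by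
  rw [f_single_of_lt hr hrs ha, map_add, signedFactorial_single, signedFactorial_single]
  simp only [Nat.factorial_succ]
  push_cast
  field_simp
  ring

theorem range_f_le_ker_signedFactorial_of_odd {a : ℕ} (hodd : Odd a) :
    range (f a) ≤ ker (signedFactorial (a + 1)) := by
  rw [range_le_ker_iff]
  refine lhom_ext' fun ⟨⟨r, s⟩, hr, hrs, ha⟩ => LinearMap.ext_ring ?_
  have hne : r ≠ s := by
    rintro rfl
    exact Nat.not_odd_iff_even.2 ⟨r, ha.symm⟩ hodd
  exact signedFactorial_f_single_of_lt hr (lt_of_le_of_ne hrs hne) ha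

theorem isCompl_range_span_single_of_odd {a : ℕ} (hodd : Odd a) (q : B (a + 1)) :
    IsCompl (range (f a)) (span ℚ {single q (1 : ℚ)}) := by
  refine ⟨(disjoint_span_singleton' (single_ne_zero.2 one_ne_zero)).2 fun hq => ?_,
    codisjoint_range_span_single q⟩
  exact signedFactorial_single_one_ne_zero q (range_f_le_ker_signedFactorial_of_odd hodd hq)

theorem f_range_codim_one_of_odd_general {a : ℕ} (hodd : Odd a) (q : B (a + 1)) :
    Module.finrank ℚ (V (a + 1) ⧸ range (f a)) = 1 ∧
      IsCompl (range (f a)) (span ℚ {single q (1 : ℚ)}) := by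
  have hcompl := isCompl_range_span_single_of_odd hodd q
  refine ⟨?_, hcompl⟩
  rw [(quotientEquivOfIsCompl _ _ hcompl).finrank_eq]
  exact finrank_span_singleton (single_ne_zero.2 one_ne_zero)

theorem f_range_codim_one_of_odd (a : ℕ) (ha : 3 ≤ a) (hodd : Odd a) :
    Module.finrank ℚ (V (a + 1) ⧸ LinearMap.range (f a)) = 1 ∧
      IsCompl (LinearMap.range (f a))
        (Submodule.span ℚ
          {Finsupp.single
            (⟨((a - 1) / 2, (a + 3) / 2), by
              obtain ⟨t, ht⟩ := hodd
              subst ht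
              refine ⟨?_, ?_, ?_⟩ <;> omega⟩ : B (a + 1)) (1 : ℚ)}) :=
  f_range_codim_one_of_odd_general hodd _
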